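/- Let 0 < p < 1, let α = max(p, 1−p), and let m ≥ k ≥ 1. Let A be a random m×k matrix whose entries are independent Bernoulli(p) random variables. Then the probability that A has rank k over the real numbers is at least 1 − min(1, k·α^{m−k+1}). -/

import Mathlib

open Finset Matrix
open scoped Classical

section SmallBall

variable {β K : Type*} [Fintype β] [Field K] {w : β → ℝ} {α : ℝ} {x : β → K}

/-- The weights of a product distribution add up to one. -/
lemma sum_prod_weight_eq_one {ι : Type*} [Fintype ι] [DecidableEq ι] (hw1 : ∑ b, w b = 1) :
    ∑ v : ι → β, ∏ i, w (v i) = 1 := by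
  rw [← Fintype.prod_sum fun (_ : ι) b => w b]
  simp [hw1]

/-- A random vector with independent coordinates, each with atoms of mass at most `α`, lies in a
given translate of a subspace of codimension at least `n` with probability at most `α ^ n`. -/
lemma sum_prod_weight_mem_translate_le (hw0 : ∀ b, 0 ≤ w b) (hw1 : ∑ b, w b = 1)
    (hwα : ∀ b, w b ≤ α) (hα0 : 0 ≤ α) (hx : Function.Injective x) :
    ∀ (m n : ℕ) (V : Submodule K (Fin m → K)) (c : Fin m → K), Module.finrank K V + n ≤ m →
      (∑ v : Fin m → β, if (fun i => x (v i) + c i) ∈ V then ∏ i, w (v i) else 0) ≤ α ^ n := by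
  intro m
  induction m with
  | zero =>
    intro n V c h
    obtain rfl : n = 0 := by omega
    rw [pow_zero, ← sum_prod_weight_eq_one (ι := Fin 0) hw1]
    exact Finset.sum_le_sum fun v _ => by split_ifs <;> simp
  | succ m ih =>
    intro n V c h
    let L : (Fin m → K) →ₗ[K] (Fin (m + 1) → K) :=
      { toFun := fun y => Fin.cons 0 y
        map_add' := fun y z => by ext i; refine Fin.cases ?_ (fun i => ?_) i <;> simp
        map_smul' := fun a y => by ext i; refine Fin.cases ?_ (fun i => ?_) i <;> simp }
    have hL : ∀ y, L y = Fin.cons 0 y := fun _ => rfl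
    have hLinj : Function.Injective L := fun y z hyz =>
      Fin.cons_right_injective (α := fun _ => K) 0 hyz
    have hmap : (V.comap L).map L ≤ V := Submodule.map_comap_le L V
    have hdim : Module.finrank K ((V.comap L).map L) = Module.finrank K (V.comap L) :=
      (Submodule.equivMapOfInjective L hLinj _).finrank_eq.symm
    have hsplit : (∑ v : Fin (m + 1) → β,
          if (fun i => x (v i) + c i) ∈ V then ∏ i, w (v i) else 0) =
        ∑ b, w b * ∑ u : Fin m → β,
          if (Fin.cons (x b + c 0) fun i => x (u i) + c i.succ : Fin (m + 1) → K) ∈ V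
          then ∏ i, w (u i) else 0 := by
      rw [← (Fin.consEquiv fun _ => β).sum_comp, Fintype.sum_prod_type]
      refine Finset.sum_congr rfl fun b _ => ?_
      rw [Finset.mul_sum]
      refine Finset.sum_congr rfl fun u _ => ?_
      have : (fun i => x ((Fin.consEquiv fun _ => β) (b, u) i) + c i) =
          (Fin.cons (x b + c 0) fun i => x (u i) + c i.succ : Fin (m + 1) → K) := by
        ext i; refine Fin.cases ?_ (fun i => ?_) i <;> simp [Fin.consEquiv]
      rw [this, Fin.prod_univ_succ, mul_ite, mul_zero]
      simp [Fin.consEquiv]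
    have hslice : ∀ (b : β) (n : ℕ), Module.finrank K (V.comap L) + n ≤ m →
        (∑ u : Fin m → β,
          if (Fin.cons (x b + c 0) fun i => x (u i) + c i.succ : Fin (m + 1) → K) ∈ V
          then ∏ i, w (u i) else 0) ≤ α ^ n := by
      intro b n hn
      by_cases ht : ∃ t ∈ V, t 0 = x b + c 0
      · obtain ⟨t, htV, ht0⟩ := ht
        refine le_trans (le_of_eq ?_) (ih n (V.comap L) (fun i => c i.succ - t i.succ) hn)
        refine Finset.sum_congr rfl fun u _ => ?_
        refine if_congr ?_ rfl rfl
        rw [Submodule.mem_comap, hL, ← V.sub_mem_iff_left htV]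
        refine iff_of_eq (congrArg (· ∈ V) ?_)
        ext i; refine Fin.cases ?_ (fun i => ?_) i <;> simp [ht0, add_sub_assoc]
      · refine le_trans (le_of_eq (Finset.sum_eq_zero fun u _ => if_neg fun hu => ?_))
          (pow_nonneg hα0 n)
        exact ht ⟨_, hu, by simp⟩
    rw [hsplit]
    by_cases hV : ∀ t ∈ V, t 0 = 0
    · rcases n with _ | n
      · rw [← hsplit, pow_zero, ← sum_prod_weight_eq_one (ι := Fin (m + 1)) hw1]
        refine Finset.sum_le_sum fun v _ => ?_
        split_ifs
        exacts [le_rfl, Finset.prod_nonneg fun i _ => hw0 _]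
      · have hle : Module.finrank K (V.comap L) + n ≤ m := by
          have := Submodule.finrank_mono hmap
          omega
        by_cases hb : ∃ b, x b + c 0 = 0
        · obtain ⟨b, hb⟩ := hb
          rw [Finset.sum_eq_single b, pow_succ']
          · exact mul_le_mul (hwα b) (hslice b n hle) (Finset.sum_nonneg fun u _ => by
              split_ifs
              exacts [Finset.prod_nonneg fun i _ => hw0 _, le_rfl]) hα0
          · intro b' _ hne
            rw [Finset.sum_eq_zero, mul_zero]
            refine fun u _ => if_neg fun hu => hne (hx ?_)
            have := hV _ hu
            rw [Fin.cons_zero, ← hb] at this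
            exact add_right_cancel this
          · simp
        · refine le_trans (le_of_eq (Finset.sum_eq_zero fun b _ => ?_)) (pow_nonneg hα0 _)
          rw [Finset.sum_eq_zero, mul_zero]
          exact fun u _ => if_neg fun hu => hb ⟨b, by simpa using hV _ hu⟩
    · push Not at hV
      obtain ⟨t, htV, ht0⟩ := hV
      have hlt : (V.comap L).map L < V := by
        refine lt_of_le_of_ne hmap fun heq => ht0 ?_
        rw [← heq] at htV
        obtain ⟨y, -, rfl⟩ := htV
        simp [hL]
      have hle : Module.finrank K (V.comap L) + n ≤ m := by
        have := Submodule.finrank_lt_finrank_of_lt hlt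
        omega
      calc _ ≤ ∑ b, w b * α ^ n :=
            Finset.sum_le_sum fun b _ => mul_le_mul_of_nonneg_left (hslice b n hle) (hw0 b)
        _ = α ^ n := by rw [← Finset.sum_mul, hw1, one_mul]

/-- In a random matrix with independent entries whose atoms have mass at most `α`, a given column
(listed here as the members of a family) lies in the span of the others with probability at most
`α ^ (m - k)`. -/
lemma sum_prod_weight_mem_span_le (hw0 : ∀ b, 0 ≤ w b) (hw1 : ∑ b, w b = 1)
    (hwα : ∀ b, w b ≤ α) (hα0 : 0 ≤ α) (hx : Function.Injective x) {m k : ℕ} (hkm : k ≤ m)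
    (j : Fin (k + 1)) :
    (∑ B : Fin (k + 1) → Fin m → β,
      if x ∘ B j ∈ Submodule.span K (Set.range fun l : Fin k => x ∘ B (j.succAbove l))
      then ∏ l, ∏ i, w (B l i) else 0) ≤ α ^ (m - k) := by
  rw [← (Fin.insertNthEquiv (fun _ => Fin m → β) j).sum_comp, Fintype.sum_prod_type_right]
  calc _ = ∑ C : Fin k → Fin m → β, (∏ l, ∏ i, w (C l i)) * ∑ v : Fin m → β,
          if (fun i => x (v i) + (0 : Fin m → K) i) ∈
            Submodule.span K (Set.range fun l => x ∘ C l)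
          then ∏ i, w (v i) else 0 := by
        refine Finset.sum_congr rfl fun C _ => ?_
        rw [Finset.mul_sum]
        refine Finset.sum_congr rfl fun v _ => ?_
        rw [Fin.prod_univ_succAbove _ j, mul_ite, mul_zero, mul_comm]
        simp [Fin.insertNthEquiv, Function.comp_def]
    _ ≤ ∑ C : Fin k → Fin m → β, (∏ l, ∏ i, w (C l i)) * α ^ (m - k) := by
        refine Finset.sum_le_sum fun C _ => mul_le_mul_of_nonneg_left ?_
          (Finset.prod_nonneg fun l _ => Finset.prod_nonneg fun i _ => hw0 _)
        refine sum_prod_weight_mem_translate_le hw0 hw1 hwα hα0 hx m (m - k) _ 0 ?_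
        have := finrank_range_le_card (R := K) fun l => x ∘ C l
        rw [Set.finrank, Fintype.card_fin] at this
        omega
    _ = α ^ (m - k) := by
        rw [← Finset.sum_mul, sum_prod_weight_eq_one (w := fun v : Fin m → β => ∏ i, w (v i))
          (sum_prod_weight_eq_one hw1), one_mul]

/-- A random matrix with independent entries whose atoms have mass at most `α` fails to have
linearly independent columns with probability at most `(k + 1) * α ^ (m - k)`. -/
lemma sum_prod_weight_rank_ne_le (hw0 : ∀ b, 0 ≤ w b) (hw1 : ∑ b, w b = 1)
    (hwα : ∀ b, w b ≤ α) (hα0 : 0 ≤ α) (hx : Function.Injective x) {m k : ℕ} (hkm : k ≤ m) :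
    (∑ A : Fin m → Fin (k + 1) → β,
      if (Matrix.of fun i j => x (A i j)).rank = k + 1 then 0
      else ∏ i, ∏ j, w (A i j)) ≤ (k + 1) * α ^ (m - k) := by
  rw [← (Equiv.piComm fun (_ : Fin (k + 1)) (_ : Fin m) => β).sum_comp]
  calc _ ≤ ∑ B : Fin (k + 1) → Fin m → β, ∑ j,
          if x ∘ B j ∈ Submodule.span K (Set.range fun l : Fin k => x ∘ B (j.succAbove l))
          then ∏ l, ∏ i, w (B l i) else 0 := by
        refine Finset.sum_le_sum fun B _ => ?_
        have hW : 0 ≤ ∏ l, ∏ i, w (B l i) :=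
          Finset.prod_nonneg fun l _ => Finset.prod_nonneg fun i _ => hw0 _
        have hterm : ∀ j ∈ Finset.univ, 0 ≤
            if x ∘ B j ∈ Submodule.span K (Set.range fun l : Fin k => x ∘ B (j.succAbove l))
            then ∏ l, ∏ i, w (B l i) else 0 := fun j _ => by
          split_ifs
          exacts [hW, le_rfl]
        split_ifs with hrank
        · exact Finset.sum_nonneg hterm
        · have hdep : ¬ LinearIndependent K fun j => x ∘ B j := fun hli => hrank <| by
            have := LinearIndependent.rank_matrix (M := Matrix.of fun j i => x (B j i)) hli
            rw [← Matrix.rank_transpose, Fintype.card_fin] at this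
            exact this
          rw [linearIndependent_iff_notMem_span] at hdep
          push Not at hdep
          obtain ⟨j, hj⟩ := hdep
          refine le_trans (le_of_eq ?_) (Finset.single_le_sum hterm (Finset.mem_univ j))
          have himage : ((fun j => x ∘ B j) '' (Set.univ \ {j})) =
              Set.range fun l : Fin k => x ∘ B (j.succAbove l) := by
            rw [← Set.compl_eq_univ_sdiff, ← Fin.range_succAbove, ← Set.range_comp]
            rfl
          rw [himage] at hj
          rw [if_pos hj, Finset.prod_comm]
          rfl
    _ ≤ ∑ _j : Fin (k + 1), α ^ (m - k) := by
        rw [Finset.sum_comm]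
        exact Finset.sum_le_sum fun j _ => sum_prod_weight_mem_span_le hw0 hw1 hwα hα0 hx hkm j
    _ = (k + 1) * α ^ (m - k) := by simp

end SmallBall

/-- Lemma 4 (rank of a matrix drawn from the i.i.d. ensemble).
The entries of the random `m × k` binary matrix are independent Bernoulli(p);
with `α = max(p, 1-p)` and `m ≥ k ≥ 1`, the matrix has real rank `k` with
probability at least `1 - min(1, k * α^(m-k+1))`. -/
theorem stmt_5 (m k : ℕ) (hk : 1 ≤ k) (hmk : k ≤ m)
    (p : ℝ) (hp0 : 0 < p) (hp1 : p < 1) :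
    (∑ A : Fin m → Fin k → Bool,
        if (Matrix.of (fun i j => if A i j then (1 : ℝ) else 0) :
            Matrix (Fin m) (Fin k) ℝ).rank = k then
          ∏ i : Fin m, ∏ j : Fin k, (if A i j then p else 1 - p)
        else 0)
      ≥ 1 - min 1 ((k : ℝ) * (max p (1 - p)) ^ (m - k + 1)) := by
  obtain ⟨k, rfl⟩ : ∃ l, k = l + 1 := ⟨k - 1, by omega⟩
  have hw0 : ∀ b : Bool, 0 ≤ if b then p else 1 - p := by
    intro b; split_ifs <;> linarith
  have hw1 : ∑ b : Bool, (if b then p else 1 - p) = 1 := by simp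
  have hwα : ∀ b : Bool, (if b then p else 1 - p) ≤ max p (1 - p) := by
    intro b; split_ifs <;> simp
  have hx : Function.Injective fun b : Bool => if b then (1 : ℝ) else 0 := by
    intro a b; cases a <;> cases b <;> simp
  have hbad := sum_prod_weight_rank_ne_le hw0 hw1 hwα (le_max_of_le_left hp0.le) hx
    (Nat.le_of_succ_le hmk)
  have htotal := sum_prod_weight_eq_one (ι := Fin m)
    (w := fun v : Fin (k + 1) → Bool => ∏ j, if v j then p else 1 - p)
    (sum_prod_weight_eq_one hw1)
  rw [show m - (k + 1) + 1 = m - k by omega, Nat.cast_add_one, ge_iff_le, sub_le_comm]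
  refine le_min ?_ (le_trans (le_of_eq ?_) hbad)
  · refine sub_le_self _ (Finset.sum_nonneg fun A _ => ?_)
    split_ifs
    exacts [Finset.prod_nonneg fun i _ => Finset.prod_nonneg fun j _ => hw0 _, le_rfl]
  · rw [sub_eq_iff_eq_add', ← Finset.sum_add_distrib]
    refine htotal.symm.trans (Finset.sum_congr rfl fun A _ => ?_)
    split_ifs <;> simp
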